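/- A connected signed graph Σ=(G,σ) is balanced if and only if L^max(Σ) = L^min(Σ) and this common matrix L^±(Σ) is cospectral with (has the same multiset of eigenvalues as) the distance Laplacian L(G) = Tr(G) − D(G) of the underlying unsigned graph G, where D(G) is the ordinary distance matrix of G. -/

import Mathlib

/-! The sign of a walk is multiplicative under concatenation.

If every cycle is positive, then deleting loops from a walk (`SimpleGraph.Walk.bypass`) does not
change its sign: each deleted piece is either a cycle or an edge traversed back and forth. Hence
closed walks are positive, and there is a potential `s : V → {1, -1}` such that every `uv`-walk has
sign `s u * s v`. Then `σ_max(u,v) = σ_min(u,v) = s u * s v`, so `L^max = L^min` is the conjugate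
of `L(G)` by the diagonal matrix of `s`, which gives equality of characteristic polynomials.

Conversely, `L(G)` is singular as it kills the all-ones vector, so `L^max` is singular as well by
cospectrality. Let `L^max x = 0` with `x ≠ 0`. At a vertex `u` where `|x u|` is maximal, the
`u`-th equation multiplied by `x u` reads `∑ v, d(u,v) (x u ^ 2 - σ_max(u,v) x u x v) = 0` with
nonnegative terms, so `x u = σ_max(u,v) x v` for all `v ≠ u`. Thus `|x|` is constant, every
vertex is maximal, and the relation holds at every edge, where `σ_max` is the edge sign. Going
around a closed walk multiplies `x` by the sign of the walk, so that sign is `1`. -/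

open Classical

noncomputable section

/-- `σ_max(u,v)`: the maximum of `σ(P)` over all shortest `uv`-paths `P`; it is `-1`
exactly when all shortest `uv`-paths are negative. -/
def sigmaMax {V : Type*} (G : SimpleGraph V) (σ : Sym2 V → ℝ) (u v : V) : ℝ :=
  if ∃ p : G.Walk u v, p.IsPath ∧ p.length = G.dist u v ∧ (p.edges.map σ).prod = 1
  then 1 else -1

/-- `σ_min(u,v)`: the minimum of `σ(P)` over all shortest `uv`-paths `P`; it is `+1`
exactly when all shortest `uv`-paths are positive. -/
def sigmaMin {V : Type*} (G : SimpleGraph V) (σ : Sym2 V → ℝ) (u v : V) : ℝ :=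
  if ∃ p : G.Walk u v, p.IsPath ∧ p.length = G.dist u v ∧ (p.edges.map σ).prod = -1
  then -1 else 1

/-- The max-signed distance matrix `D^max(Σ) = (σ_max(u,v) d(u,v))`. -/
def distMax {V : Type*} [Fintype V] (G : SimpleGraph V) (σ : Sym2 V → ℝ) :
    Matrix V V ℝ :=
  Matrix.of fun u v => sigmaMax G σ u v * (G.dist u v : ℝ)

/-- The min-signed distance matrix `D^min(Σ) = (σ_min(u,v) d(u,v))`. -/
def distMin {V : Type*} [Fintype V] (G : SimpleGraph V) (σ : Sym2 V → ℝ) :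
    Matrix V V ℝ :=
  Matrix.of fun u v => sigmaMin G σ u v * (G.dist u v : ℝ)

/-- The diagonal matrix `Tr(G)` of transmissions `Tr(v) = ∑_u d(v,u)`. -/
def transMat {V : Type*} [Fintype V] [DecidableEq V] (G : SimpleGraph V) :
    Matrix V V ℝ :=
  Matrix.diagonal fun v => ((∑ u, G.dist v u : ℕ) : ℝ)

/-- The max-signed distance Laplacian `L^max(Σ) = Tr(G) - D^max(Σ)`. -/
def lapMax {V : Type*} [Fintype V] [DecidableEq V] (G : SimpleGraph V)
    (σ : Sym2 V → ℝ) : Matrix V V ℝ :=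
  transMat G - distMax G σ

/-- The min-signed distance Laplacian `L^min(Σ) = Tr(G) - D^min(Σ)`. -/
def lapMin {V : Type*} [Fintype V] [DecidableEq V] (G : SimpleGraph V)
    (σ : Sym2 V → ℝ) : Matrix V V ℝ :=
  transMat G - distMin G σ

/-- The ordinary distance matrix `D(G) = (d(u,v))` of the underlying unsigned graph. -/
def distMat {V : Type*} [Fintype V] (G : SimpleGraph V) : Matrix V V ℝ :=
  Matrix.of fun u v => (G.dist u v : ℝ)

/-- The distance Laplacian `L(G) = Tr(G) - D(G)` of the underlying unsigned graph. -/
def lapDist {V : Type*} [Fintype V] [DecidableEq V] (G : SimpleGraph V) :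
    Matrix V V ℝ :=
  transMat G - distMat G

/-- The sign of a walk: the product of the signs of its edges, with multiplicity. -/
def walkSign {V : Type*} {G : SimpleGraph V} (σ : Sym2 V → ℝ) {u v : V} (p : G.Walk u v) : ℝ :=
  (p.edges.map σ).prod

section WalkSign

variable {V : Type*} {G : SimpleGraph V} {σ : Sym2 V → ℝ}

lemma walkSign_nil (u : V) : walkSign σ (SimpleGraph.Walk.nil : G.Walk u u) = 1 := by
  simp [walkSign]

lemma walkSign_cons {u v w : V} (h : G.Adj u v) (p : G.Walk v w) :
    walkSign σ (SimpleGraph.Walk.cons h p) = σ s(u, v) * walkSign σ p := by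
  simp [walkSign]

lemma walkSign_append {u v w : V} (p : G.Walk u v) (q : G.Walk v w) :
    walkSign σ (p.append q) = walkSign σ p * walkSign σ q := by
  simp [walkSign]

lemma walkSign_reverse {u v : V} (p : G.Walk u v) :
    walkSign σ p.reverse = walkSign σ p := by
  simp [walkSign]

lemma walkSign_eq_one_or (hσ : ∀ e ∈ G.edgeSet, σ e = 1 ∨ σ e = -1) {u v : V}
    (p : G.Walk u v) : walkSign σ p = 1 ∨ walkSign σ p = -1 := by
  induction p with
  | nil => left; exact walkSign_nil _
  | cons h p ih =>
    rw [walkSign_cons]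
    rcases hσ _ (G.mem_edgeSet.2 h) with h1 | h1 <;> rcases ih with h2 | h2 <;> simp [h1, h2]

/-- A path that uses the edge joining its two ends consists of that edge only. -/
lemma walkSign_of_isPath_of_mem_edges {u v : V} (q : G.Walk v u) (hq : q.IsPath)
    (he : s(u, v) ∈ q.edges) : walkSign σ q = σ s(u, v) := by
  cases q with
  | nil => simp at he
  | @cons _ w _ h q =>
    rw [SimpleGraph.Walk.cons_isPath_iff] at hq
    rw [SimpleGraph.Walk.edges_cons, List.mem_cons] at he
    rcases he with he | he
    · have hw : u = w := by
        rw [Sym2.eq_swap] at he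
        exact Sym2.congr_right.1 he
      subst hw
      obtain rfl := (SimpleGraph.Walk.isPath_iff_nil.1 hq.1).eq_nil
      rw [walkSign_cons, walkSign_nil, mul_one, Sym2.eq_swap]
    · exact absurd (q.snd_mem_support_of_mem_edges he) hq.2

/-- An edge followed by a path back to its start is a cycle or a repeated edge. -/
lemma sign_mul_walkSign_of_isPath (hσ : ∀ e ∈ G.edgeSet, σ e = 1 ∨ σ e = -1)
    (hb : ∀ (u : V) (c : G.Walk u u), c.IsCycle → walkSign σ c = 1)
    {u v : V} (h : G.Adj u v) (q : G.Walk v u) (hq : q.IsPath) :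
    σ s(u, v) * walkSign σ q = 1 := by
  by_cases he : s(u, v) ∈ q.edges
  · rw [walkSign_of_isPath_of_mem_edges q hq he]
    rcases hσ _ (G.mem_edgeSet.2 h) with h1 | h1 <;> simp [h1]
  · rw [← walkSign_cons h]
    exact hb _ _ ((SimpleGraph.Walk.cons_isCycle_iff q h).2 ⟨hq, he⟩)

/-- If all cycles are positive, loop removal preserves signs of walks. -/
lemma walkSign_bypass [DecidableEq V] (hσ : ∀ e ∈ G.edgeSet, σ e = 1 ∨ σ e = -1)
    (hb : ∀ (u : V) (c : G.Walk u u), c.IsCycle → walkSign σ c = 1)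
    {u v : V} (p : G.Walk u v) : walkSign σ p.bypass = walkSign σ p := by
  induction p with
  | nil => rfl
  | @cons u w v h p ih =>
    rw [walkSign_cons, ← ih, SimpleGraph.Walk.bypass]
    split_ifs with hs
    · have h1 := sign_mul_walkSign_of_isPath hσ hb h _ (p.bypass_isPath.takeUntil hs)
      have h2 : walkSign σ p.bypass = _ :=
        (congrArg (walkSign σ) (p.bypass.take_spec hs)).symm
      rw [h2, walkSign_append, ← mul_assoc, h1, one_mul]
    · rw [walkSign_cons]

lemma walkSign_closed (hσ : ∀ e ∈ G.edgeSet, σ e = 1 ∨ σ e = -1)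
    (hb : ∀ (u : V) (c : G.Walk u u), c.IsCycle → walkSign σ c = 1)
    {u : V} (p : G.Walk u u) : walkSign σ p = 1 := by
  rw [← walkSign_bypass hσ hb p, (SimpleGraph.Walk.isPath_iff_nil.1 p.bypass_isPath).eq_nil,
    walkSign_nil]

/-- Harary's potential: a balanced connected signed graph is switching equivalent to the
all-positive one. -/
lemma exists_potential (hconn : G.Connected) (hσ : ∀ e ∈ G.edgeSet, σ e = 1 ∨ σ e = -1)
    (hb : ∀ (u : V) (c : G.Walk u u), c.IsCycle → walkSign σ c = 1) :
    ∃ s : V → ℝ, (∀ v, s v = 1 ∨ s v = -1) ∧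
      ∀ (u v : V) (p : G.Walk u v), walkSign σ p = s u * s v := by
  obtain ⟨r⟩ := hconn.nonempty
  have hw : ∀ v, Nonempty (G.Walk r v) := fun v => hconn.preconnected r v
  refine ⟨fun v => walkSign σ (hw v).some, fun v => walkSign_eq_one_or hσ _, fun u v p => ?_⟩
  have h := walkSign_closed hσ hb (((hw u).some.append p).append (hw v).some.reverse)
  rw [walkSign_append, walkSign_append, walkSign_reverse] at h
  rcases walkSign_eq_one_or hσ (hw u).some with h1 | h1 <;>
  rcases walkSign_eq_one_or hσ (hw v).some with h2 | h2 <;>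
  simp only [h1, h2] at h ⊢ <;> linarith

lemma sigmaMax_eq_one_or (u v : V) : sigmaMax G σ u v = 1 ∨ sigmaMax G σ u v = -1 := by
  unfold sigmaMax; split_ifs <;> simp

lemma sigmaMax_eq_of_forall (hconn : G.Connected) {u v : V} {a : ℝ} (ha : a = 1 ∨ a = -1)
    (h : ∀ p : G.Walk u v, p.length = G.dist u v → walkSign σ p = a) :
    sigmaMax G σ u v = a := by
  obtain ⟨q, hq, hl⟩ := hconn.exists_path_of_dist u v
  unfold sigmaMax
  split_ifs with hc
  · obtain ⟨p, -, hpl, hp⟩ := hc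
    exact hp.symm.trans (h p hpl)
  · rcases ha with rfl | rfl
    · exact absurd ⟨q, hq, hl, h q hl⟩ hc
    · rfl

lemma sigmaMin_eq_of_forall (hconn : G.Connected) {u v : V} {a : ℝ} (ha : a = 1 ∨ a = -1)
    (h : ∀ p : G.Walk u v, p.length = G.dist u v → walkSign σ p = a) :
    sigmaMin G σ u v = a := by
  obtain ⟨q, hq, hl⟩ := hconn.exists_path_of_dist u v
  unfold sigmaMin
  split_ifs with hc
  · obtain ⟨p, -, hpl, hp⟩ := hc
    exact hp.symm.trans (h p hpl)
  · rcases ha with rfl | rfl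
    · rfl
    · exact absurd ⟨q, hq, hl, h q hl⟩ hc

lemma sigmaMax_of_adj (hconn : G.Connected) (hσ : ∀ e ∈ G.edgeSet, σ e = 1 ∨ σ e = -1)
    {u v : V} (h : G.Adj u v) : sigmaMax G σ u v = σ s(u, v) := by
  refine sigmaMax_eq_of_forall hconn (hσ _ (G.mem_edgeSet.2 h)) fun p hp => ?_
  rw [SimpleGraph.dist_eq_one_iff_adj.2 h] at hp
  cases p with
  | nil => simp at hp
  | cons h' q =>
    cases q with
    | nil => simp [walkSign]
    | cons => simp at hp

end WalkSign

section Spectral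

variable {V : Type*} [Fintype V] [DecidableEq V] {G : SimpleGraph V} {σ : Sym2 V → ℝ}

lemma det_lapDist (hconn : G.Connected) : (lapDist G).det = 0 := by
  obtain ⟨r⟩ := hconn.nonempty
  refine Matrix.exists_mulVec_eq_zero_iff.1 ⟨fun _ => 1, fun h => one_ne_zero (congrFun h r), ?_⟩
  ext u
  simp [lapDist, transMat, distMat, Matrix.mulVec, dotProduct,
    Matrix.diagonal_apply]

/-- Equation `u` of `L^max x = 0`, multiplied by `x u`. -/
lemma sum_of_lapMax_mulVec {x : V → ℝ} (hx : (lapMax G σ).mulVec x = 0) (u : V) :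
    ∑ v, (G.dist u v : ℝ) * (x u * x u - sigmaMax G σ u v * x u * x v) = 0 := by
  have h := congrFun hx u
  rw [lapMax, transMat, Matrix.sub_mulVec, Pi.sub_apply, Matrix.mulVec_diagonal, Pi.zero_apply]
    at h
  simp only [distMax, Matrix.mulVec, dotProduct, Matrix.of_apply, Nat.cast_sum] at h
  have h' := congrArg (x u * ·) h
  simp only [mul_zero, Finset.sum_mul, ← Finset.sum_sub_distrib, Finset.mul_sum] at h'
  rw [← h']
  exact Finset.sum_congr rfl fun v _ => by ring

/-- The maximum principle for the kernel of `L^max`. -/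
lemma eq_sigmaMax_mul_of_max (hconn : G.Connected) {x : V → ℝ}
    (hx : (lapMax G σ).mulVec x = 0) {u : V} (hu : ∀ v, |x v| ≤ |x u|) {v : V} (huv : u ≠ v) :
    x u = sigmaMax G σ u v * x v := by
  have hnn : ∀ w, 0 ≤ x u * x u - sigmaMax G σ u w * x u * x w := by
    intro w
    have h1 : |x u * x w| ≤ x u * x u := by
      rw [abs_mul, ← abs_mul_abs_self (x u)]
      exact mul_le_mul_of_nonneg_left (hu w) (abs_nonneg _)
    have h2 := abs_le.1 h1
    rcases sigmaMax_eq_one_or (G := G) (σ := σ) u w with h | h <;> rw [h] <;> linarith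
  have h0 := (Finset.sum_eq_zero_iff_of_nonneg fun w _ =>
    mul_nonneg (Nat.cast_nonneg _) (hnn w)).1 (sum_of_lapMax_mulVec hx u) v (Finset.mem_univ v)
  have hd : (G.dist u v : ℝ) ≠ 0 := Nat.cast_ne_zero.2 (hconn.pos_dist_of_ne huv).ne'
  have h3 : x u * (x u - sigmaMax G σ u v * x v) = 0 := by
    rw [← (mul_eq_zero.1 h0).resolve_left hd]; ring
  rcases mul_eq_zero.1 h3 with h4 | h4
  · have h5 : x v = 0 := by
      have := hu v
      rwa [h4, abs_zero, abs_nonpos_iff] at this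
    rw [h4, h5, mul_zero]
  · linarith

lemma walkSign_closed_of_mulVec (hconn : G.Connected)
    (hσ : ∀ e ∈ G.edgeSet, σ e = 1 ∨ σ e = -1) {x : V → ℝ} (hx0 : x ≠ 0)
    (hx : (lapMax G σ).mulVec x = 0) {u : V} (c : G.Walk u u) : walkSign σ c = 1 := by
  have := hconn.nonempty
  obtain ⟨m, hm⟩ := Finite.exists_max fun v => |x v|
  have habs : ∀ v, |x v| = |x m| := by
    intro v
    by_cases hmv : m = v
    · rw [hmv]
    · rw [eq_sigmaMax_mul_of_max hconn hx hm hmv, abs_mul]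
      rcases sigmaMax_eq_one_or (G := G) (σ := σ) m v with h | h <;> simp [h]
  have hwalk : ∀ {a b : V} (p : G.Walk a b), x a = walkSign σ p * x b := by
    intro a b p
    induction p with
    | nil => rw [walkSign_nil, one_mul]
    | @cons a w b h p ih =>
      rw [walkSign_cons, mul_assoc, ← ih, ← sigmaMax_of_adj hconn hσ h]
      exact eq_sigmaMax_mul_of_max hconn hx (fun v => ((habs v).trans (habs a).symm).le) h.ne
  have hu : x u ≠ 0 := by
    intro h
    refine hx0 (funext fun v => ?_)
    rw [Pi.zero_apply, ← abs_eq_zero, habs v, ← habs u, h, abs_zero]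
  exact mul_right_cancel₀ hu (by rw [one_mul]; exact (hwalk c).symm)

end Spectral

/-- A connected signed graph `Σ = (G,σ)` is balanced if and only if
`L^max(Σ) = L^min(Σ)` and this common matrix `L^±(Σ)` is cospectral with the distance
Laplacian `L(G) = Tr(G) - D(G)` of the underlying unsigned graph `G`; cospectrality
(equality of the multisets of eigenvalues) is expressed as equality of characteristic
polynomials. -/
theorem balanced_iff_lapPM_cospectral_lapDist
    {V : Type*} [Fintype V] [DecidableEq V] (G : SimpleGraph V)
    (σ : Sym2 V → ℝ)
    (hσ : ∀ e ∈ G.edgeSet, σ e = 1 ∨ σ e = -1)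
    (hconn : G.Connected) :
    (∀ (u : V) (c : G.Walk u u), c.IsCycle → (c.edges.map σ).prod = 1) ↔
      (lapMax G σ = lapMin G σ ∧
        (lapMax G σ).charpoly = (lapDist G).charpoly) := by
  change (∀ (u : V) (c : G.Walk u u), c.IsCycle → walkSign σ c = 1) ↔ _
  constructor
  · intro hb
    obtain ⟨s, hs, hw⟩ := exists_potential hconn hσ hb
    have hss : ∀ u v, s u * s v = 1 ∨ s u * s v = -1 := by
      intro u v
      rcases hs u with h1 | h1 <;> rcases hs v with h2 | h2 <;> simp [h1, h2]
    have hmax : ∀ u v, sigmaMax G σ u v = s u * s v := fun u v =>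
      sigmaMax_eq_of_forall hconn (hss u v) fun p _ => hw u v p
    have hmin : ∀ u v, sigmaMin G σ u v = s u * s v := fun u v =>
      sigmaMin_eq_of_forall hconn (hss u v) fun p _ => hw u v p
    have hsq : ∀ v, s v * s v = 1 := fun v => by rcases hs v with h | h <;> simp [h]
    refine ⟨by ext u v; simp [lapMax, lapMin, distMax, distMin, hmax, hmin], ?_⟩
    have hS : Matrix.diagonal s * Matrix.diagonal s = 1 := by
      rw [Matrix.diagonal_mul_diagonal, funext hsq, ← Matrix.diagonal_one]
    let S : (Matrix V V ℝ)ˣ := ⟨Matrix.diagonal s, Matrix.diagonal s, hS, hS⟩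
    have hL : lapMax G σ = S.val * lapDist G * S⁻¹.val := by
      ext u v
      change _ = (Matrix.diagonal s * lapDist G * Matrix.diagonal s) u v
      rw [Matrix.mul_diagonal, Matrix.diagonal_mul]
      simp only [lapMax, lapDist, transMat, distMax, distMat, Matrix.sub_apply, Matrix.of_apply,
        Matrix.diagonal_apply, hmax]
      split_ifs with h
      · subst h
        linear_combination (-((∑ w, G.dist u w : ℕ) : ℝ)) * hsq u
      · ring
    rw [hL, Matrix.coe_units_inv, Matrix.charpoly_units_conj]
  · rintro ⟨-, hchar⟩ u c -
    have hdet : (lapMax G σ).det = 0 := by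
      rw [Matrix.det_eq_sign_charpoly_coeff, hchar, ← Matrix.det_eq_sign_charpoly_coeff,
        det_lapDist hconn]
    obtain ⟨x, hx0, hx⟩ := Matrix.exists_mulVec_eq_zero_iff.2 hdet
    exact walkSign_closed_of_mulVec hconn hσ hx0 hx c
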